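/- Suppose that η_{pq}(y_ℓ) = δ_{ℓq}·y_p − δ_{ℓp}·y_q for all p, q, ℓ ∈ {1, …, n}, where η_{pq} := Σ_{m=0}^{n} (x_p^m·∂/∂x_q^m − x_q^m·∂/∂x_p^m) and δ is the Kronecker delta. Then the coefficients satisfy, for all a, b, c, p, q, ℓ ∈ {1, …, n}: A_{a,qc}^ℓ·δ_{pb} + A_{a,qb}^ℓ·δ_{pc} − A_{p,bc}^ℓ·δ_{qa} − A_{a,pc}^ℓ·δ_{qb} − A_{a,pb}^ℓ·δ_{qc} + A_{q,bc}^ℓ·δ_{pa} − A_{a,bc}^p·δ_{ℓq} + A_{a,bc}^q·δ_{ℓp} = 0. -/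

import Mathlib

/-- The `(n+1) × (n+1)` matrix whose `j`-th column is `(x_1^j, …, x_n^j, 1)`,
with entries in the polynomial ring in the variables `x_i^j`
(a variable is a pair `(i, j) : Fin n × Fin (n+1)`, `i` the coordinate index, `j` the vertex index). -/
noncomputable def Vmat (n : ℕ) : Matrix (Fin (n+1)) (Fin (n+1)) (MvPolynomial (Fin n × Fin (n+1)) ℝ) :=
  Matrix.of fun r c => if h : (r : ℕ) < n then MvPolynomial.X (⟨r, h⟩, c) else 1

/-- The basic determinant `V`. -/
noncomputable def Vpoly (n : ℕ) : MvPolynomial (Fin n × Fin (n+1)) ℝ := (Vmat n).det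

/-- The matrix of `V` with its `i`-th row replaced by `(x_j^0 x_k^0, …, x_j^n x_k^n)`. -/
noncomputable def Xmat (n : ℕ) (i j k : Fin n) :
    Matrix (Fin (n+1)) (Fin (n+1)) (MvPolynomial (Fin n × Fin (n+1)) ℝ) :=
  Matrix.of fun r c =>
    if (r : ℕ) = (i : ℕ) then MvPolynomial.X (j, c) * MvPolynomial.X (k, c)
    else if h : (r : ℕ) < n then MvPolynomial.X (⟨r, h⟩, c) else 1

/-- The basic determinant `X_{i,jk}`. -/
noncomputable def Xpoly (n : ℕ) (i j k : Fin n) : MvPolynomial (Fin n × Fin (n+1)) ℝ :=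
  (Xmat n i j k).det


/-- The Kronecker delta. -/
def kron {n : ℕ} (a b : Fin n) : ℝ := if a = b then 1 else 0

/-- `y_ℓ = Σ_{i,j,k} A_{i,jk}^ℓ X_{i,jk}`. -/
noncomputable def ypoly (n : ℕ) (A : Fin n → Fin n → Fin n → Fin n → ℝ) (ℓ : Fin n) :
    MvPolynomial (Fin n × Fin (n+1)) ℝ :=
  ∑ i : Fin n, ∑ j : Fin n, ∑ k : Fin n, A ℓ i j k • Xpoly n i j k

/-! Polarization `E_pq = ∑ m, x_p^m ∂/∂x_q^m` satisfies `E_pq V = δ_pq V`, and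
`E_pq X_{i,jk} = δ_qj X_{i,pk} + δ_qk X_{i,jp} + δ_pq X_{i,jk} - δ_pi X_{q,jk}`. In
`η_pq = E_pq - E_qp` the trace terms `δ_pq` cancel, so the covariance hypothesis is a linear
relation among the `X_{i,jk}`. To read off its coefficients, apply `∂²/∂x_b^m ∂x_c^m`: column `m` of
the matrix of `X_{i,jk}` is quadratic only in its `i`-th entry, so what remains is a constant times
the `(m, i)` entry of the adjugate of the matrix of `V`, and these are independent since `V ≠ 0`. -/

open MvPolynomial

section DerivationDet

lemma derivation_prod {R A M ι : Type*} [CommSemiring R] [CommSemiring A] [AddCommMonoid M]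
    [Algebra R A] [Module R M] [Module A M] [DecidableEq ι] (D : Derivation R A M) (s : Finset ι)
    (f : ι → A) : D (∏ i ∈ s, f i) = ∑ i ∈ s, (∏ j ∈ s.erase i, f j) • D (f i) := by
  induction s using Finset.induction_on with
  | empty => simp
  | insert a s ha ih =>
    rw [Finset.prod_insert ha, D.leibniz, ih, Finset.sum_insert ha, Finset.erase_insert ha,
      add_comm, Finset.smul_sum]
    congr 1
    refine Finset.sum_congr rfl fun i hi => ?_
    rw [Finset.erase_insert_of_ne (ne_of_mem_of_not_mem hi ha).symm,
      Finset.prod_insert (by simp [ha]), mul_smul]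

variable {R A ι : Type*} [CommSemiring R] [CommRing A] [Algebra R A] [DecidableEq ι] [Fintype ι]

lemma derivation_det_eq_sum_updateCol (D : Derivation R A A) (M : Matrix ι ι A) :
    D M.det = ∑ c, (M.updateCol c fun r => D (M r c)).det := by
  simp_rw [Matrix.det_apply, map_sum, Units.smul_def, map_zsmul, derivation_prod, Finset.smul_sum]
  rw [Finset.sum_comm]
  refine Finset.sum_congr rfl fun c _ => Finset.sum_congr rfl fun σ _ => ?_
  rw [← Finset.mul_prod_erase Finset.univ _ (Finset.mem_univ c), Matrix.updateCol_self,
    smul_eq_mul, mul_comm]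
  congr 2
  refine Finset.prod_congr rfl fun i hi => ?_
  rw [Matrix.updateCol_ne (Finset.ne_of_mem_erase hi)]

lemma derivation_det_eq_sum_updateRow (D : Derivation R A A) (M : Matrix ι ι A) :
    D M.det = ∑ r, (M.updateRow r fun c => D (M r c)).det := by
  rw [← Matrix.det_transpose, derivation_det_eq_sum_updateCol]
  simp_rw [Matrix.updateCol_transpose, Matrix.det_transpose, Matrix.transpose_apply]

lemma derivation_det_of_const_off_col (D : Derivation R A A) (M : Matrix ι ι A) (m : ι)
    (hM : ∀ r, ∀ c ≠ m, D (M r c) = 0) :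
    D M.det = (M.updateCol m fun r => D (M r m)).det := by
  rw [derivation_det_eq_sum_updateCol]
  refine Finset.sum_eq_single_of_mem m (Finset.mem_univ m) fun c _ hc => ?_
  exact Matrix.det_eq_zero_of_column_eq_zero c fun r => by simp [hM r c hc]

lemma derivation_derivation_det_of_const_off_col (D D' : Derivation R A A) (M : Matrix ι ι A)
    (m : ι) (hD : ∀ r, ∀ c ≠ m, D (M r c) = 0) (hD' : ∀ r, ∀ c ≠ m, D' (M r c) = 0) :
    D (D' M.det) = (M.updateCol m fun r => D (D' (M r m))).det := by
  rw [derivation_det_of_const_off_col D' M m hD', derivation_det_of_const_off_col D _ m]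
  · simp
  · intro r c hc
    rw [Matrix.updateCol_ne hc, hD r c hc]

lemma det_updateCol_single (M : Matrix ι ι A) (i m : ι) (a : A) :
    (M.updateCol m (Pi.single i a)).det = a * M.adjugate m i := by
  rw [← Matrix.cramer_apply, Matrix.cramer_eq_adjugate_mulVec, Matrix.mulVec_single,
    Pi.smul_apply, Matrix.col_apply, op_smul_eq_mul, mul_comm]

lemma adjugate_updateRow_self (M : Matrix ι ι A) (i m : ι) (g : ι → A) :
    (M.updateRow i g).adjugate m i = M.adjugate m i := by
  simp only [Matrix.adjugate_apply, Matrix.updateRow_idem]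

lemma det_updateRow_updateRow_apply_self (M : Matrix ι ι A) {i q : ι} (hqi : q ≠ i) (g : ι → A) :
    ((M.updateRow i g).updateRow q (M i)).det = -(M.updateRow q g).det := by
  have hrows : (M.updateRow i g).updateRow q (M i) =
      (M.updateRow q g).submatrix (Equiv.swap q i) id := by
    ext r c
    rw [Matrix.submatrix_apply, Equiv.swap_apply_def]
    by_cases hrq : r = q
    · simp [hrq, hqi.symm]
    · by_cases hri : r = i <;> simp [hrq, hri, hqi.symm]
  rw [hrows, Matrix.det_permute, Equiv.Perm.sign_swap hqi]
  simp

lemma det_updateRow_updateRow_apply (M : Matrix ι ι A) {i q : ι} (hqi : q ≠ i) (p : ι)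
    (g : ι → A) :
    ((M.updateRow i g).updateRow q (M p)).det =
      (if p = q then (M.updateRow i g).det else 0) -
        (if p = i then (M.updateRow q g).det else 0) := by
  by_cases hpi : p = i
  · subst hpi
    simp [hqi.symm, det_updateRow_updateRow_apply_self M hqi g]
  have hrow : M p = M.updateRow i g p := (Matrix.updateRow_ne hpi).symm
  rw [if_neg hpi, sub_zero, hrow]
  split_ifs with hpq
  · rw [hpq, Matrix.updateRow_eq_self]
  · exact Matrix.det_updateRow_eq_zero hpq

lemma derivation_det_updateRow_of_apply_eq_ite (D : Derivation R A A) (M : Matrix ι ι A)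
    (p q i : ι) (g : ι → A) (hM : ∀ r c, D (M r c) = if r = q then M p c else 0) :
    D (M.updateRow i g).det =
      (M.updateRow i fun c => D (g c)).det + (if p = q then (M.updateRow i g).det else 0) -
        (if p = i then (M.updateRow q g).det else 0) := by
  have hother : ∀ r ≠ i, ((M.updateRow i g).updateRow r
      fun c => D (M.updateRow i g r c)).det =
        if r = q then (if p = q then (M.updateRow i g).det else 0) -
          (if p = i then (M.updateRow q g).det else 0) else 0 := by
    intro r hri
    simp_rw [Matrix.updateRow_ne hri, hM]
    by_cases hrq : r = q
    · subst hrq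
      simpa only [if_true] using det_updateRow_updateRow_apply M hri p g
    · simpa only [hrq, if_false] using
        Matrix.det_eq_zero_of_row_eq_zero r fun c => by rw [Matrix.updateRow_self]
  rw [derivation_det_eq_sum_updateRow, ← Finset.add_sum_erase _ _ (Finset.mem_univ i),
    Finset.sum_congr rfl fun r hr => hother r (Finset.ne_of_mem_erase hr), Finset.sum_ite_eq']
  simp only [Matrix.updateRow_self, Matrix.updateRow_idem, add_sub_assoc, Finset.mem_erase,
    Finset.mem_univ, and_true]
  congr 1
  by_cases hqi : q = i <;> simp [hqi]

end DerivationDet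

section Polarization

variable {R σ τ : Type*} [CommSemiring R] [Fintype τ]

/-- The polarization operator `∑ m, x_p^m ∂/∂x_q^m` on polynomials in the variables `x_i^m`; it
generates the substitution `x_q ↦ x_q + t x_p`, and `η_pq` is
`polarization p q - polarization q p`. -/
noncomputable def polarization (p q : σ) :
    Derivation R (MvPolynomial (σ × τ) R) (MvPolynomial (σ × τ) R) :=
  ∑ m : τ, (X (p, m) : MvPolynomial (σ × τ) R) • pderiv (q, m)

lemma polarization_apply (p q : σ) (f : MvPolynomial (σ × τ) R) :
    polarization p q f = ∑ m : τ, X (p, m) * pderiv (q, m) f := by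
  rw [polarization, ← Derivation.coeFnAddMonoidHom_apply, map_sum, Finset.sum_apply]
  rfl

lemma polarization_X [DecidableEq σ] (p q j : σ) (m : τ) :
    polarization p q (X (j, m) : MvPolynomial (σ × τ) R) = if j = q then X (p, m) else 0 := by
  classical
  simp [polarization_apply, pderiv_X, Pi.single_apply, ite_and]

end Polarization

section BasicDeterminants

variable {n : ℕ}

lemma kron_comm (a b : Fin n) : kron a b = kron b a := by
  simp only [kron, eq_comm]

lemma Vmat_castSucc (i : Fin n) (c : Fin (n + 1)) : Vmat n i.castSucc c = X (i, c) := by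
  simp [Vmat]

lemma Vmat_last (c : Fin (n + 1)) : Vmat n (Fin.last n) c = 1 := by
  simp [Vmat]

lemma Xmat_eq_updateRow (i j k : Fin n) :
    Xmat n i j k = (Vmat n).updateRow i.castSucc fun c => X (j, c) * X (k, c) := by
  ext1 r c
  simp only [Matrix.updateRow_apply, Xmat, Vmat, Matrix.of_apply, Fin.ext_iff, Fin.val_castSucc]

lemma Xpoly_eq_det_updateRow (i j k : Fin n) :
    Xpoly n i j k = ((Vmat n).updateRow i.castSucc fun c => X (j, c) * X (k, c)).det := by
  rw [Xpoly, Xmat_eq_updateRow]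

lemma polarization_Vmat (p q : Fin n) (r c : Fin (n + 1)) :
    polarization p q (Vmat n r c) = if r = q.castSucc then Vmat n p.castSucc c else 0 := by
  cases r using Fin.lastCases with
  | last => simp [Vmat_last, (Fin.castSucc_lt_last q).ne']
  | cast r => simp [Vmat_castSucc, polarization_X]

lemma polarization_Xpoly (p q i j k : Fin n) :
    polarization p q (Xpoly n i j k) =
      kron q j • Xpoly n i p k + kron q k • Xpoly n i j p + kron p q • Xpoly n i j k -
        kron p i • Xpoly n q j k := by
  have hrow : (fun c : Fin (n + 1) => polarization p q (X (j, c) * X (k, c))) =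
      ((C (kron q j) : MvPolynomial (Fin n × Fin (n + 1)) ℝ) • fun c => X (p, c) * X (k, c)) +
        (C (kron q k) : MvPolynomial (Fin n × Fin (n + 1)) ℝ) • fun c => X (j, c) * X (p, c) := by
    funext c
    simp only [Derivation.leibniz, polarization_X, smul_eq_mul, Pi.add_apply, Pi.smul_apply, kron,
      eq_comm (a := q)]
    split_ifs <;> simp [mul_comm, add_comm]
  simp only [Xpoly_eq_det_updateRow]
  rw [derivation_det_updateRow_of_apply_eq_ite _ _ _ _ _ _ (polarization_Vmat p q), hrow,
    Matrix.det_updateRow_add, Matrix.det_updateRow_smul, Matrix.det_updateRow_smul]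
  simp [kron]

lemma pderiv_pderiv_X_mul_X (b c j k : Fin n) (m : Fin (n + 1)) :
    pderiv (b, m) (pderiv (c, m) (X (j, m) * X (k, m) : MvPolynomial (Fin n × Fin (n + 1)) ℝ)) =
      C (kron j b * kron k c + kron j c * kron k b) := by
  have hX (i d : Fin n) : pderiv (i, m) (X (d, m) : MvPolynomial (Fin n × Fin (n + 1)) ℝ) =
      C (kron d i) := by
    simp [pderiv_X, Pi.single_apply, kron, apply_ite C]
  simp only [pderiv_mul, hX, map_add, pderiv_C, C_mul]
  ring

lemma pderiv_pderiv_Xpoly (b c i j k : Fin n) (m : Fin (n + 1)) :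
    pderiv (b, m) (pderiv (c, m) (Xpoly n i j k)) =
      (kron j b * kron k c + kron j c * kron k b) • (Vmat n).adjugate m i.castSucc := by
  have hcol : (fun r => pderiv (b, m) (pderiv (c, m) (Xmat n i j k r m))) =
      Pi.single i.castSucc (C (kron j b * kron k c + kron j c * kron k b)) := by
    funext r
    cases r using Fin.lastCases with
    | last => simp [Xmat_eq_updateRow, Vmat_last, (Fin.castSucc_lt_last i).ne']
    | cast r =>
      obtain rfl | hri := eq_or_ne r i
      · simp [Xmat_eq_updateRow, -Derivation.leibniz, pderiv_pderiv_X_mul_X]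
      · simp [Xmat_eq_updateRow, hri, Vmat_castSucc, pderiv_X, Pi.single_apply, apply_ite]
  have hconst (a : Fin n) (r : Fin (n + 1)) (c' : Fin (n + 1)) (hc' : c' ≠ m) :
      pderiv (a, m) (Xmat n i j k r c') = 0 := by
    have hX (d : Fin n) : pderiv (a, m) (X (d, c') : MvPolynomial (Fin n × Fin (n + 1)) ℝ) = 0 :=
      pderiv_X_of_ne fun h => hc' (Prod.ext_iff.1 h).2
    rw [Xmat, Matrix.of_apply]
    split_ifs <;> simp [hX]
  rw [Xpoly, derivation_derivation_det_of_const_off_col _ _ _ m (hconst b) (hconst c), hcol,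
    det_updateCol_single, Xmat_eq_updateRow, adjugate_updateRow_self, smul_eq_C_mul]

lemma Vpoly_ne_zero (n : ℕ) : Vpoly n ≠ 0 := by
  intro hV
  let simplex : Fin n × Fin (n + 1) → ℝ := fun v => if v.1.castSucc = v.2 then 1 else 0
  have hdet : ((eval simplex).mapMatrix (Vmat n)).det = 1 := by
    rw [Matrix.det_of_isLowerTriangular]
    · refine Finset.prod_eq_one fun r _ => ?_
      cases r using Fin.lastCases <;> simp [simplex, Vmat_last, Vmat_castSucc]
    · intro r c hrc
      have hr : r ≠ Fin.last n := fun h => (Fin.le_last c).not_gt (h ▸ hrc)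
      obtain ⟨r, rfl⟩ := Fin.exists_castSucc_eq.2 hr
      simpa [simplex, Vmat_castSucc] using ne_of_gt hrc
  rw [← RingHom.map_det, ← Vpoly, hV, map_zero] at hdet
  exact zero_ne_one hdet

lemma eq_zero_of_sum_smul_adjugate_Vmat {w : Fin n → ℝ}
    (hw : ∀ m, ∑ i, w i • (Vmat n).adjugate m i.castSucc = 0) : w = 0 := by
  have hdet : (Vmat n).adjugate.det ≠ 0 := by
    rw [Matrix.det_adjugate]
    exact pow_ne_zero _ (Vpoly_ne_zero n)
  have hmul : (Vmat n).adjugate.mulVec (Fin.snoc (fun i => C (w i)) 0 : Fin (n + 1) → _) = 0 := by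
    funext m
    simpa [Matrix.mulVec, dotProduct, Fin.sum_univ_castSucc, smul_eq_C_mul, mul_comm] using hw m
  have hzero := Matrix.eq_zero_of_mulVec_eq_zero hdet hmul
  funext i
  simpa using congrFun hzero i.castSucc

/-- The linear combination `∑ B_{i,jk} X_{i,jk}`, as a linear function of the coefficients; the
polynomial `y_ℓ` is its value at `A^ℓ`. -/
noncomputable def combX (n : ℕ) :
    (Fin n → Fin n → Fin n → ℝ) →ₗ[ℝ] MvPolynomial (Fin n × Fin (n + 1)) ℝ where
  toFun B := ∑ i, ∑ j, ∑ k, B i j k • Xpoly n i j k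
  map_add' B B' := by simp [add_smul, Finset.sum_add_distrib]
  map_smul' t B := by simp [mul_smul, Finset.smul_sum]

lemma combX_apply (B : Fin n → Fin n → Fin n → ℝ) :
    combX n B = ∑ i, ∑ j, ∑ k, B i j k • Xpoly n i j k := rfl

lemma ypoly_eq_combX (A : Fin n → Fin n → Fin n → Fin n → ℝ) (ℓ : Fin n) :
    ypoly n A ℓ = combX n (A ℓ) := rfl

lemma add_swap_eq_zero_of_combX_eq_zero {B : Fin n → Fin n → Fin n → ℝ} (hB : combX n B = 0)
    (a b c : Fin n) : B a b c + B a c b = 0 := by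
  refine congrFun
    (eq_zero_of_sum_smul_adjugate_Vmat (w := fun i => B i b c + B i c b) fun m => ?_) a
  have hderiv := congrArg (fun f => pderiv (b, m) (pderiv (c, m) f)) hB
  simp only [combX_apply, map_sum, map_zero, Derivation.map_smul, pderiv_pderiv_Xpoly, smul_smul,
    ← Finset.sum_smul] at hderiv
  simpa [kron, mul_add, Finset.sum_add_distrib] using hderiv

/-- The action of `polarization p q` on the coefficients of a combination of the `X_{i,jk}`. -/
def polarizeCoeff (p q : Fin n) (B : Fin n → Fin n → Fin n → ℝ) : Fin n → Fin n → Fin n → ℝ :=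
  fun a b c => B a q c * kron p b + B a b q * kron p c + kron p q * B a b c - B p b c * kron q a

lemma polarization_combX (p q : Fin n) (B : Fin n → Fin n → Fin n → ℝ) :
    polarization p q (combX n B) = combX n (polarizeCoeff p q B) := by
  have hsecond : ∑ i, ∑ j, ∑ k, B i j k • kron q j • Xpoly n i p k =
      ∑ i, ∑ j, ∑ k, (B i q k * kron p j) • Xpoly n i j k := by
    simp [kron, Finset.sum_ite_irrel]
  have hthird : ∑ i, ∑ j, ∑ k, B i j k • kron q k • Xpoly n i j p =
      ∑ i, ∑ j, ∑ k, (B i j q * kron p k) • Xpoly n i j k := by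
    simp [kron]
  have hfirst : ∑ i, ∑ j, ∑ k, B i j k • kron p i • Xpoly n q j k =
      ∑ i, ∑ j, ∑ k, (B p j k * kron q i) • Xpoly n i j k := by
    simp [kron, Finset.sum_ite_irrel]
  simp only [combX_apply, map_sum, Derivation.map_smul, polarization_Xpoly, polarizeCoeff, smul_add,
    smul_sub, add_smul, sub_smul, Finset.sum_add_distrib, Finset.sum_sub_distrib, hsecond, hthird,
    hfirst]
  simp only [smul_smul, mul_comm]

end BasicDeterminants

/-- If `η_{pq}(y_ℓ) = δ_{ℓq} y_p − δ_{ℓp} y_q` for all `p, q, ℓ`, then the coefficients satisfy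
the eight-term linear relations coming from rotation covariance. -/
theorem coeff_rotation_covariance (n : ℕ) (hn : 1 ≤ n)
    (A : Fin n → Fin n → Fin n → Fin n → ℝ)
    (hA : ∀ ℓ i j k, A ℓ i j k = A ℓ i k j)
    (hy : ∀ p q ℓ : Fin n,
      ∑ m : Fin (n+1),
          (MvPolynomial.X (p, m) * MvPolynomial.pderiv (q, m) (ypoly n A ℓ)
            - MvPolynomial.X (q, m) * MvPolynomial.pderiv (p, m) (ypoly n A ℓ)) =
        kron ℓ q • ypoly n A p - kron ℓ p • ypoly n A q) :
    ∀ a b c p q ℓ : Fin n,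
      A ℓ a q c * kron p b + A ℓ a q b * kron p c - A ℓ p b c * kron q a
        - A ℓ a p c * kron q b - A ℓ a p b * kron q c + A ℓ q b c * kron p a
        - A p a b c * kron ℓ q + A q a b c * kron ℓ p = 0 := by
  intro a b c p q ℓ
  have hcomb : combX n (polarizeCoeff p q (A ℓ) - polarizeCoeff q p (A ℓ) -
      (kron ℓ q • A p - kron ℓ p • A q)) = 0 := by
    have h := hy p q ℓ
    rw [Finset.sum_sub_distrib, ← polarization_apply, ← polarization_apply] at h
    simp only [ypoly_eq_combX, polarization_combX] at h
    rw [map_sub, map_sub, map_sub, map_smul, map_smul, h, sub_self]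
  have hsymm := add_swap_eq_zero_of_combX_eq_zero hcomb a b c
  simp only [polarizeCoeff, Pi.sub_apply, Pi.smul_apply, smul_eq_mul, hA _ _ c, hA _ _ b q,
    hA _ _ b p, kron_comm q p] at hsymm
  linarith
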